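/- arXiv:2407.18863 — 2 statements merged into one kernel-verified Lean document; each statement's English description precedes it below -/
import Mathlib

section
/- Let G be a finitely generated group with finite symmetric generating set S, and suppose the Cayley graph X = Cay(G,S) satisfies the Morse local-to-global property. Then the Morse boundary of G is strongly σ-compact; that is, there exists a sequence (M_n)_{n∈ℕ} of Morse gauges such that every Morse geodesic ray in X based at the identity is M_n-Morse for some n, and for every Morse gauge M there exists n = n(M) such that every M-Morse geodesic ray in X based at the identity is M_n-Morse. -/
open Metric Set Filter

namespace MorseLTG

/-- A Morse gauge: a non-decreasing continuous function `[1, ∞) → [0, ∞)`. -/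
def IsMorseGauge (M : ℝ → ℝ) : Prop :=
  MonotoneOn M (Set.Ici 1) ∧ ContinuousOn M (Set.Ici 1) ∧ ∀ t : ℝ, 1 ≤ t → 0 ≤ M t

section Space

variable {X : Type*} [MetricSpace X]

/-- `γ` is a `Q`-quasi-geodesic on the set `I ⊆ ℝ`. -/
def QGeoOn (Q : ℝ) (I : Set ℝ) (γ : ℝ → X) : Prop :=
  ContinuousOn γ I ∧ ∀ s ∈ I, ∀ t ∈ I,
    |t - s| / Q - Q ≤ dist (γ s) (γ t) ∧ dist (γ s) (γ t) ≤ Q * |t - s| + Q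

/-- `γ` is `M`-Morse on `I`: every `Q`-quasi-geodesic with endpoints on `γ|_I`
stays in the closed `M Q`-neighbourhood of the corresponding subsegment of `γ`. -/
def MorseOn (M : ℝ → ℝ) (I : Set ℝ) (γ : ℝ → X) : Prop :=
  ∀ Q : ℝ, 1 ≤ Q → ∀ s ∈ I, ∀ t ∈ I, s ≤ t →
    ∀ (lam : ℝ → X) (a b : ℝ), a ≤ b → QGeoOn Q (Set.Icc a b) lam →
      lam a = γ s → lam b = γ t →
      ∀ u ∈ Set.Icc a b, ∃ v ∈ Set.Icc s t, dist (lam u) (γ v) ≤ M Q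

/-- `γ` is a geodesic on `I` (an isometric embedding). -/
def GeodesicOn (I : Set ℝ) (γ : ℝ → X) : Prop :=
  ∀ s ∈ I, ∀ t ∈ I, dist (γ s) (γ t) = |t - s|

/-- A geodesic ray based at `x₀`. -/
def GeodesicRayFrom (x₀ : X) (γ : ℝ → X) : Prop :=
  γ 0 = x₀ ∧ GeodesicOn (Set.Ici 0) γ

/-- A Morse geodesic ray (based anywhere). -/
def IsMorseGeodesicRay (γ : ℝ → X) : Prop :=
  GeodesicOn (Set.Ici 0) γ ∧ ∃ M : ℝ → ℝ, IsMorseGauge M ∧ MorseOn M (Set.Ici 0) γ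

/-- `p` is `L`-locally an `M`-Morse `Q`-quasi-geodesic on `I`. -/
def LocMorseQGeoOn (Q : ℝ) (M : ℝ → ℝ) (L : ℝ) (I : Set ℝ) (p : ℝ → X) : Prop :=
  ∀ s ∈ I, ∀ t ∈ I, s ≤ t → t - s ≤ L →
    QGeoOn Q (Set.Icc s t) p ∧ MorseOn M (Set.Icc s t) p

/-- `p` is `L`-locally `M`-Morse on `I`. -/
def LocMorseOn (M : ℝ → ℝ) (L : ℝ) (I : Set ℝ) (p : ℝ → X) : Prop :=
  ∀ s ∈ I, ∀ t ∈ I, s ≤ t → t - s ≤ L → MorseOn M (Set.Icc s t) p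

/-- The Morse local-to-global property for a geodesic metric space. -/
def MLTG (X : Type*) [MetricSpace X] : Prop :=
  ∀ Q : ℝ, 1 ≤ Q → ∀ M : ℝ → ℝ, IsMorseGauge M →
    ∃ (L Q' : ℝ) (M' : ℝ → ℝ), 0 < L ∧ 1 ≤ Q' ∧ IsMorseGauge M' ∧
      ∀ I : Set ℝ, I.OrdConnected → ∀ p : ℝ → X,
        LocMorseQGeoOn Q M L I p → QGeoOn Q' I p ∧ MorseOn M' I p

/-- `X` is a geodesic metric space. -/
def GeodesicSpace (X : Type*) [MetricSpace X] : Prop :=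
  ∀ x y : X, ∃ γ : ℝ → X, γ 0 = x ∧ γ (dist x y) = y ∧
    GeodesicOn (Set.Icc 0 (dist x y)) γ

/-- Gromov hyperbolicity via thin geodesic triangles. -/
def GromovHyperbolic (X : Type*) [MetricSpace X] : Prop :=
  ∃ δ : ℝ, 0 ≤ δ ∧
    ∀ (γ₁ γ₂ γ₃ : ℝ → X) (a₁ b₁ a₂ b₂ a₃ b₃ : ℝ),
      GeodesicOn (Set.Icc a₁ b₁) γ₁ → GeodesicOn (Set.Icc a₂ b₂) γ₂ →
        GeodesicOn (Set.Icc a₃ b₃) γ₃ →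
      γ₁ b₁ = γ₂ a₂ → γ₂ b₂ = γ₃ a₃ → γ₃ b₃ = γ₁ a₁ →
      ∀ s ∈ Set.Icc a₁ b₁,
        ∃ p ∈ γ₂ '' Set.Icc a₂ b₂ ∪ γ₃ '' Set.Icc a₃ b₃, dist (γ₁ s) p ≤ δ

/-- The set of closest-point projections of `x` to `A`. -/
def projSet (A : Set X) (x : X) : Set X :=
  {y ∈ A | ∀ z ∈ A, dist x y ≤ dist x z}

/-- A subset `A` is `C`-contracting. -/
def ContractingSet (C : ℝ) (A : Set X) : Prop :=
  ∀ x : X, Metric.diam (⋃ y ∈ Metric.ball x (Metric.infDist x A), projSet A y) ≤ C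

/-- `γ` is a `C`-contracting geodesic on `I`. -/
def ContractingOn (C : ℝ) (I : Set ℝ) (γ : ℝ → X) : Prop :=
  GeodesicOn I γ ∧ ContractingSet C (γ '' I)

/-- The Morse boundary of `X` (with basepoint `x₀`) is σ-compact. -/
def SigmaCompactMorseBoundary (x₀ : X) : Prop :=
  ∃ Ms : ℕ → ℝ → ℝ, (∀ n, IsMorseGauge (Ms n)) ∧
    ∀ γ : ℝ → X, GeodesicRayFrom x₀ γ → ∀ M : ℝ → ℝ, IsMorseGauge M →
      MorseOn M (Set.Ici 0) γ → ∃ n, MorseOn (Ms n) (Set.Ici 0) γ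

/-- `Ms` is a strong exhaustion of the Morse boundary of `X` based at `x₀`. -/
def IsStrongExhaustion (x₀ : X) (Ms : ℕ → ℝ → ℝ) : Prop :=
  (∀ n, IsMorseGauge (Ms n)) ∧
  (∀ γ : ℝ → X, GeodesicRayFrom x₀ γ → ∀ M : ℝ → ℝ, IsMorseGauge M →
    MorseOn M (Set.Ici 0) γ → ∃ n, MorseOn (Ms n) (Set.Ici 0) γ) ∧
  (∀ M : ℝ → ℝ, IsMorseGauge M → ∃ n, ∀ γ : ℝ → X, GeodesicRayFrom x₀ γ →
    MorseOn M (Set.Ici 0) γ → MorseOn (Ms n) (Set.Ici 0) γ)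

/-- The Morse boundary of `X` (with basepoint `x₀`) is strongly σ-compact. -/
def StronglySigmaCompactMorseBoundary (x₀ : X) : Prop :=
  ∃ Ms : ℕ → ℝ → ℝ, IsStrongExhaustion x₀ Ms

end Space

section Action

variable {G : Type*} [Group G] {X : Type*} [MetricSpace X]

/-- `φ` is an action of `G` on `X` by isometries. -/
def IsIsometricAction (φ : G → X → X) : Prop :=
  (∀ x : X, φ 1 x = x) ∧ (∀ g h : G, ∀ x : X, φ (g * h) x = φ g (φ h x)) ∧
    ∀ g : G, Isometry (φ g)

/-- `φ` is a geometric (proper and cocompact, isometric) action of `G` on `X`. -/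
def IsGeometricAction (φ : G → X → X) : Prop :=
  IsIsometricAction φ ∧
  (∀ (x : X) (r : ℝ), {g : G | dist x (φ g x) ≤ r}.Finite) ∧
  (∃ (x₀ : X) (r : ℝ), ∀ y : X, ∃ g : G, dist y (φ g x₀) ≤ r)

end Action

/-- `G` has contraction: it acts geometrically on some geodesic metric space
containing a strongly contracting geodesic ray. -/
def HasContraction (G : Type*) [Group G] : Prop :=
  ∃ (X : Type) (m : MetricSpace X), ∃ φ : G → X → X,
    letI := m
    IsGeometricAction φ ∧ GeodesicSpace X ∧
      ∃ (γ : ℝ → X) (C : ℝ), 0 ≤ C ∧ GeodesicOn (Set.Ici 0) γ ∧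
        ContractingSet C (γ '' Set.Ici 0)

section Horo

variable {X : Type*} [MetricSpace X]

/-- The horofunction associated to a geodesic ray `γ` based at `x₀`
(for geodesic rays, the infimum below equals the limit of
`t ↦ d(z, γ t) - d(x₀, γ t)` as `t → ∞`, since this function is non-increasing
and bounded below). -/
noncomputable def horofn (x₀ : X) (γ : ℝ → X) (z : X) : ℝ :=
  sInf ((fun t => dist z (γ t) - dist x₀ (γ t)) '' Set.Ici 0)

/-- The horofunction map `y ↦ ρ_y = d(·, y) - d(x₀, y)`. -/
noncomputable def horomap (x₀ y : X) : ContinuousMap X ℝ :=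
  ⟨fun z => dist z y - dist x₀ y, by fun_prop⟩

end Horo

section HoroAction

variable {G : Type*} [Group G] {X : Type*} [MetricSpace X]

/-- The `G`-action on the horofunction compactification:
`(g · f)(z) = f (g⁻¹ z) - f (g⁻¹ x₀)`. -/
noncomputable def horoAction (φ : G → X → X) (hc : ∀ g : G, Continuous (φ g)) (x₀ : X)
    (g : G) (f : ContinuousMap X ℝ) : ContinuousMap X ℝ :=
  ⟨fun z => f (φ g⁻¹ z) - f (φ g⁻¹ x₀), (f.continuous.comp (hc g⁻¹)).sub continuous_const⟩

end HoroAction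

section Words

variable {S : Type*}

/-- A word over the symmetrised alphabet `S ∪ S⁻¹`. -/
abbrev Word (S : Type*) := List (S × Bool)

/-- The formal inverse of a word. -/
def wordInv (w : Word S) : Word S := (w.map fun a => (a.1, !a.2)).reverse

/-- A word is reduced if it has no adjacent cancelling pair. -/
def ReducedWord (w : Word S) : Prop := w.Chain' fun a b => a.1 = b.1 → a.2 = b.2

/-- A word is cyclically reduced if all its cyclic shifts are reduced. -/
def CyclicallyReduced (w : Word S) : Prop := ∀ k : ℕ, ReducedWord (w.rotate k)

/-- The closure of `R ∪ R⁻¹` under cyclic shifts. -/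
def symmClosure (R : Set (Word S)) : Set (Word S) :=
  {w | ∃ r ∈ R, ∃ k : ℕ, w = r.rotate k ∨ w = (wordInv r).rotate k}

/-- A piece: a (non-trivial) common prefix of two distinct elements of `R̄`. -/
def IsPiece (R : Set (Word S)) (p : Word S) : Prop :=
  p ≠ [] ∧ ∃ r₁ ∈ symmClosure R, ∃ r₂ ∈ symmClosure R, r₁ ≠ r₂ ∧ p <+: r₁ ∧ p <+: r₂

/-- The `C'(lam)` small-cancellation condition. -/
def SmallCancellation (R : Set (Word S)) (lam : ℝ) : Prop :=
  (∀ r ∈ R, CyclicallyReduced r) ∧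
  ∀ r ∈ symmClosure R, ∀ p : Word S, IsPiece R p → p <:+: r →
    (p.length : ℝ) < lam * r.length

/-- A viable function. -/
def Viable (f : ℕ → ℝ) : Prop :=
  Monotone f ∧ (∀ n, 6 ≤ f n) ∧ Filter.Tendsto f Filter.atTop Filter.atTop

/-- The pair `(x, R)` satisfies the `C'(1/f)` small-cancellation condition. -/
def PairSmallCancellation (f : ℕ → ℝ) (x : Word S) (R : Set (Word S)) : Prop :=
  ∀ r ∈ symmClosure R, ∀ p : Word S, p ≠ [] → p <:+: x → p <:+: r →
    (p.length : ℝ) < (r.length : ℝ) / f r.length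

/-- The increasing partial small-cancellation condition. -/
def IPSC (R : Set (Word S)) : Prop :=
  ∀ ns : ℕ → ℕ, (∀ i, 0 < ns i) →
    ∃ f : ℕ → ℝ, Viable f ∧
      ∀ K : ℕ, ∃ i : ℕ, K ≤ i ∧ ∃ r ∈ symmClosure R, ∃ x y : Word S,
        r = x ++ y ∧ (ns i : ℝ) ≤ r.length ∧ (r.length : ℝ) / i ≤ x.length ∧
        PairSmallCancellation f x R

end Words

section Cayley

variable {G : Type*} [Group G] {S : Type*}

/-- The element of `G` spelled by a word over `S ∪ S⁻¹`. -/
def evalWord (σ : S → G) (w : Word S) : G :=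
  (w.map fun a => if a.2 then σ a.1 else (σ a.1)⁻¹).prod

/-- The word metric on `G` with respect to the generating map `σ`. -/
noncomputable def wordDist (σ : S → G) (g h : G) : ℕ :=
  sInf {n : ℕ | ∃ w : Word S, w.length = n ∧ g * evalWord σ w = h}

/-- A (discrete) edge path in the Cayley graph: consecutive points are adjacent. -/
def DIsPath (σ : S → G) (I : Set ℤ) (p : ℤ → G) : Prop :=
  ∀ n : ℤ, n ∈ I → n + 1 ∈ I → wordDist σ (p n) (p (n + 1)) ≤ 1

/-- A discrete `Q`-quasi-geodesic in the Cayley graph. -/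
def DQGeoOn (σ : S → G) (Q : ℝ) (I : Set ℤ) (p : ℤ → G) : Prop :=
  DIsPath σ I p ∧ ∀ m ∈ I, ∀ n ∈ I,
    |(n : ℝ) - (m : ℝ)| / Q - Q ≤ (wordDist σ (p m) (p n) : ℝ) ∧
      (wordDist σ (p m) (p n) : ℝ) ≤ Q * |(n : ℝ) - (m : ℝ)| + Q

/-- A discrete geodesic in the Cayley graph. -/
def DGeodesicOn (σ : S → G) (I : Set ℤ) (p : ℤ → G) : Prop :=
  ∀ m ∈ I, ∀ n ∈ I, (wordDist σ (p m) (p n) : ℤ) = |n - m|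

/-- `p` is `M`-Morse on `I` in the Cayley graph. -/
def DMorseOn (σ : S → G) (M : ℝ → ℝ) (I : Set ℤ) (p : ℤ → G) : Prop :=
  ∀ Q : ℝ, 1 ≤ Q → ∀ s ∈ I, ∀ t ∈ I, s ≤ t →
    ∀ (q : ℤ → G) (a b : ℤ), a ≤ b → DQGeoOn σ Q (Set.Icc a b) q →
      q a = p s → q b = p t →
      ∀ n ∈ Set.Icc a b, ∃ m ∈ Set.Icc s t, (wordDist σ (q n) (p m) : ℝ) ≤ M Q

/-- A geodesic ray in the Cayley graph based at the identity. -/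
def DGeodesicRay (σ : S → G) (p : ℤ → G) : Prop :=
  p 0 = 1 ∧ DGeodesicOn σ (Set.Ici 0) p

/-- `p` is `L`-locally an `M`-Morse `Q`-quasi-geodesic. -/
def DLocMorseQGeoOn (σ : S → G) (Q : ℝ) (M : ℝ → ℝ) (L : ℝ) (I : Set ℤ) (p : ℤ → G) : Prop :=
  ∀ s ∈ I, ∀ t ∈ I, s ≤ t → ((t - s : ℤ) : ℝ) ≤ L →
    DQGeoOn σ Q (Set.Icc s t) p ∧ DMorseOn σ M (Set.Icc s t) p

/-- `p` is `L`-locally `M`-Morse. -/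
def DLocMorseOn (σ : S → G) (M : ℝ → ℝ) (L : ℝ) (I : Set ℤ) (p : ℤ → G) : Prop :=
  ∀ s ∈ I, ∀ t ∈ I, s ≤ t → ((t - s : ℤ) : ℝ) ≤ L → DMorseOn σ M (Set.Icc s t) p

/-- The Morse local-to-global property for the Cayley graph of `(G, σ)`. -/
def CayMLTG (σ : S → G) : Prop :=
  ∀ Q : ℝ, 1 ≤ Q → ∀ M : ℝ → ℝ, IsMorseGauge M →
    ∃ (L Q' : ℝ) (M' : ℝ → ℝ), 0 < L ∧ 1 ≤ Q' ∧ IsMorseGauge M' ∧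
      ∀ I : Set ℤ, I.OrdConnected → ∀ p : ℤ → G,
        DLocMorseQGeoOn σ Q M L I p → DQGeoOn σ Q' I p ∧ DMorseOn σ M' I p

/-- The geodesic Morse local-to-global property for the Cayley graph. -/
def CayGeodesicMLTG (σ : S → G) : Prop :=
  ∀ M : ℝ → ℝ, IsMorseGauge M →
    ∃ (L : ℝ) (M' : ℝ → ℝ), 0 < L ∧ IsMorseGauge M' ∧
      ∀ I : Set ℤ, I.OrdConnected → ∀ p : ℤ → G, DGeodesicOn σ I p →
        DLocMorseOn σ M L I p → DMorseOn σ M' I p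

/-- σ-compactness of the Morse boundary of the Cayley graph. -/
def CaySigmaCompact (σ : S → G) : Prop :=
  ∃ Ms : ℕ → ℝ → ℝ, (∀ n, IsMorseGauge (Ms n)) ∧
    ∀ p : ℤ → G, DGeodesicRay σ p → ∀ M : ℝ → ℝ, IsMorseGauge M →
      DMorseOn σ M (Set.Ici 0) p → ∃ n, DMorseOn σ (Ms n) (Set.Ici 0) p

/-- Strong σ-compactness of the Morse boundary of the Cayley graph. -/
def CayStronglySigmaCompact (σ : S → G) : Prop :=
  ∃ Ms : ℕ → ℝ → ℝ, (∀ n, IsMorseGauge (Ms n)) ∧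
    (∀ p : ℤ → G, DGeodesicRay σ p → ∀ M : ℝ → ℝ, IsMorseGauge M →
      DMorseOn σ M (Set.Ici 0) p → ∃ n, DMorseOn σ (Ms n) (Set.Ici 0) p) ∧
    (∀ M : ℝ → ℝ, IsMorseGauge M → ∃ n, ∀ p : ℤ → G, DGeodesicRay σ p →
      DMorseOn σ M (Set.Ici 0) p → DMorseOn σ (Ms n) (Set.Ici 0) p)

/-- The edge path starting at `g` labelled by the word `w`. -/
def pathOfWord (σ : S → G) (g : G) (w : Word S) : ℤ → G :=
  fun n => g * evalWord σ (w.take n.toNat)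

end Cayley

/-- The canonical generating map of a presented group `⟨S | R⟩`. -/
def presGen {S : Type*} (R : Set (Word S)) : S → PresentedGroup (FreeGroup.mk '' R) :=
  fun s => PresentedGroup.of s

end MorseLTG

/-!
Left translation acts on Cayley graphs by isometries, so whether a geodesic segment is `M`-Morse
depends only on the word labelling it. For a gauge `M`, let `L` be the scale and `M'` the gauge
provided by the local-to-global property, and call the pair consisting of `N = ⌊L⌋` and the set of
words of length `N` labelling `M`-Morse paths the local type of `M`. If `M₁` has the same local type
as `M`, then every `M`-Morse geodesic ray is `L₁`-locally `M₁`-Morse, hence `M₁'`-Morse. As the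
alphabet is finite, there are only countably many local types, and one representative `M₁` of each
yields the required sequence of gauges `M₁'`.
-/

namespace MorseLTG

theorem isMorseGauge_zero : IsMorseGauge 0 :=
  ⟨monotoneOn_const, continuousOn_const, fun _ _ => le_rfl⟩

theorem exists_seq_forall_exists_apply_eq {α ι : Type*} [Nonempty α] [Countable ι] (τ : α → ι) :
    ∃ e : ℕ → α, ∀ a, ∃ n, τ (e n) = τ a := by
  obtain ⟨f, hf⟩ := exists_surjective_nat (range τ)
  choose e he using fun n => (f n).2
  refine ⟨e, fun a => ?_⟩
  obtain ⟨n, hn⟩ := hf ⟨τ a, mem_range_self a⟩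
  exact ⟨n, by rw [he, hn]⟩

section Cayley

variable {G : Type*} [Group G] {S : Type*} {σ : S → G} {M M₁ : ℝ → ℝ} {I J : Set ℤ} {p p' : ℤ → G}

@[simp]
theorem wordDist_mul_left (σ : S → G) (g x y : G) :
    wordDist σ (g * x) (g * y) = wordDist σ x y := by
  simp only [wordDist, mul_assoc, mul_right_inj]

theorem exists_word_of_wordDist_ne_zero {x y : G} (h : wordDist σ x y ≠ 0) :
    ∃ w : Word S, w.length = wordDist σ x y ∧ x * evalWord σ w = y :=
  Nat.sInf_mem (Nat.nonempty_of_pos_sInf (Nat.pos_of_ne_zero h))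

theorem evalWord_append (σ : S → G) (v w : Word S) :
    evalWord σ (v ++ w) = evalWord σ v * evalWord σ w := by
  simp only [evalWord, List.map_append, List.prod_append]

theorem dQGeoOn_mul_left_iff {Q : ℝ} (g : G) :
    DQGeoOn σ Q I (fun n => g * p n) ↔ DQGeoOn σ Q I p := by
  simp only [DQGeoOn, DIsPath, wordDist_mul_left]

theorem DGeodesicOn.mono (hIJ : I ⊆ J) (h : DGeodesicOn σ J p) : DGeodesicOn σ I p :=
  fun m hm n hn => h m (hIJ hm) n (hIJ hn)

theorem DGeodesicOn.wordDist_succ {n : ℤ} (h : DGeodesicOn σ I p) (hn : n ∈ I)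
    (hn' : n + 1 ∈ I) : wordDist σ (p n) (p (n + 1)) = 1 := by
  have hdist := h n hn (n + 1) hn'
  rw [add_sub_cancel_left, abs_one] at hdist
  exact_mod_cast hdist

theorem DGeodesicOn.dQGeoOn_one (h : DGeodesicOn σ I p) : DQGeoOn σ 1 I p := by
  refine ⟨fun n hn hn' => (h.wordDist_succ hn hn').le, fun m hm n hn => ?_⟩
  have hdist : (wordDist σ (p m) (p n) : ℝ) = |(n : ℝ) - m| := by exact_mod_cast h m hm n hn
  rw [hdist]
  constructor <;> linarith

theorem CayMLTG.cayGeodesicMLTG (h : CayMLTG σ) : CayGeodesicMLTG σ := by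
  intro M hM
  obtain ⟨L, _, M', hL, -, hM', hglobal⟩ := h 1 le_rfl M hM
  refine ⟨L, M', hL, hM', fun I hI p hp hloc =>
    (hglobal I hI p fun s hs t ht hst hstL => ⟨?_, hloc s hs t ht hst hstL⟩).2⟩
  exact (hp.mono (hI.out hs ht)).dQGeoOn_one

theorem DMorseOn.mono (hIJ : I ⊆ J) (h : DMorseOn σ M J p) : DMorseOn σ M I p :=
  fun Q hQ s hs t ht => h Q hQ s (hIJ hs) t (hIJ ht)

theorem DMorseOn.congr (hI : I.OrdConnected) (hpp' : EqOn p p' I) (h : DMorseOn σ M I p) :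
    DMorseOn σ M I p' := by
  intro Q hQ s hs t ht hst q a b hab hq hqa hqb n hn
  obtain ⟨m, hm, hdist⟩ := h Q hQ s hs t ht hst q a b hab hq
    (hqa.trans (hpp' hs).symm) (hqb.trans (hpp' ht).symm) n hn
  exact ⟨m, hm, hpp' (hI.out hs ht hm) ▸ hdist⟩

theorem dMorseOn_congr (hI : I.OrdConnected) (hpp' : EqOn p p' I) :
    DMorseOn σ M I p ↔ DMorseOn σ M I p' :=
  ⟨DMorseOn.congr hI hpp', DMorseOn.congr hI hpp'.symm⟩

theorem DMorseOn.mul_left (g : G) (h : DMorseOn σ M I p) :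
    DMorseOn σ M I (fun n => g * p n) := by
  intro Q hQ s hs t ht hst q a b hab hq hqa hqb n hn
  obtain ⟨m, hm, hdist⟩ := h Q hQ s hs t ht hst (fun i => g⁻¹ * q i) a b hab
    ((dQGeoOn_mul_left_iff g⁻¹).2 hq) (inv_mul_eq_of_eq_mul hqa) (inv_mul_eq_of_eq_mul hqb) n hn
  refine ⟨m, hm, ?_⟩
  rwa [← wordDist_mul_left σ g, mul_inv_cancel_left] at hdist

theorem dMorseOn_mul_left_iff (g : G) :
    DMorseOn σ M I (fun n => g * p n) ↔ DMorseOn σ M I p :=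
  ⟨fun h => by simpa only [inv_mul_cancel_left] using h.mul_left g⁻¹, DMorseOn.mul_left g⟩

theorem dMorseOn_comp_add_left_iff (c : ℤ) :
    DMorseOn σ M I (fun n => p (c + n)) ↔ DMorseOn σ M ((c + ·) '' I) p := by
  constructor
  · rintro h Q hQ _ ⟨s, hs, rfl⟩ _ ⟨t, ht, rfl⟩ hst q a b hab hq hqa hqb n hn
    obtain ⟨m, hm, hdist⟩ := h Q hQ s hs t ht (by simpa using hst) q a b hab hq hqa hqb n hn
    exact ⟨c + m, by simpa using hm, hdist⟩
  · intro h Q hQ s hs t ht hst q a b hab hq hqa hqb n hn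
    obtain ⟨m, hm, hdist⟩ := h Q hQ (c + s) (mem_image_of_mem _ hs) (c + t)
      (mem_image_of_mem _ ht) (by simpa using hst) q a b hab hq hqa hqb n hn
    refine ⟨m - c, ⟨by linarith [hm.1], by linarith [hm.2]⟩, ?_⟩
    rwa [← add_sub_cancel c m] at hdist

theorem dLocMorseOn_of_forall_Icc_floor {L : ℝ}
    (h : ∀ s ∈ I, DMorseOn σ M (Icc s (s + ⌊L⌋₊)) p) : DLocMorseOn σ M L I p := by
  intro s hs t _ hst hstL
  obtain ⟨k, rfl⟩ := Int.le.dest hst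
  have hk : k ≤ ⌊L⌋₊ := Nat.le_floor (by simpa using hstL)
  exact (h s hs).mono (Icc_subset_Icc_right (by gcongr))

theorem pathOfWord_eq_mul_pathOfWord_one (σ : S → G) (g : G) (w : Word S) :
    pathOfWord σ g w = fun n => g * pathOfWord σ 1 w n := by
  funext n
  simp only [pathOfWord, one_mul]

theorem pathOfWord_natCast_of_length_le (σ : S → G) (g : G) {w : Word S} {n : ℕ}
    (hn : w.length ≤ n) : pathOfWord σ g w n = g * evalWord σ w := by
  rw [pathOfWord, Int.toNat_natCast, List.take_of_length_le hn]

theorem eqOn_pathOfWord_append (σ : S → G) (g : G) (v w : Word S) :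
    EqOn (pathOfWord σ g (v ++ w)) (pathOfWord σ g v) (Icc 0 v.length) := by
  intro n hn
  simp only [pathOfWord, List.take_append_of_le_length (Int.toNat_le.2 hn.2)]

theorem exists_word_eqOn_pathOfWord {N : ℕ}
    (h : ∀ n ∈ Ico (0 : ℤ) N, wordDist σ (p n) (p (n + 1)) = 1) :
    ∃ w : Word S, w.length = N ∧ EqOn p (pathOfWord σ (p 0) w) (Icc 0 N) := by
  induction N with
  | zero =>
    refine ⟨[], rfl, fun n hn => ?_⟩
    obtain rfl : n = 0 := le_antisymm hn.2 hn.1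
    simp [pathOfWord, evalWord]
  | succ N ih =>
    obtain ⟨v, rfl, hpv⟩ := ih fun n hn => h n (Ico_subset_Ico_right (by gcongr; simp) hn)
    have hlast := h v.length ⟨by positivity, by simp⟩
    obtain ⟨u, hu, hpu⟩ := exists_word_of_wordDist_ne_zero (hlast.trans_ne one_ne_zero)
    rw [hlast] at hu
    refine ⟨v ++ u, by rw [List.length_append, hu], fun n hn => ?_⟩
    obtain hnv | rfl : n ≤ v.length ∨ n = (v.length + 1 : ℕ) := by
      have := hn.2
      lia
    · exact (hpv ⟨hn.1, hnv⟩).trans (eqOn_pathOfWord_append σ _ v u ⟨hn.1, hnv⟩).symm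
    · have hpv_end : p v.length = p 0 * evalWord σ v := by
        rw [hpv (right_mem_Icc.2 (by positivity)), pathOfWord_natCast_of_length_le σ _ le_rfl]
      rw [pathOfWord_natCast_of_length_le σ _ (by simp [hu]), evalWord_append, ← mul_assoc,
        ← hpv_end, hpu, Nat.cast_add_one]

/-- The words of length `N` labelling `M`-Morse edge paths. Morseness is invariant under left
translation, so only the path starting at the identity is tested. -/
def morseWords (σ : S → G) (M : ℝ → ℝ) (N : ℕ) : Set (Word S) :=
  {w | w.length = N ∧ DMorseOn σ M (Icc 0 N) (pathOfWord σ 1 w)}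

theorem finite_morseWords [Finite S] (σ : S → G) (M : ℝ → ℝ) (N : ℕ) :
    (morseWords σ M N).Finite :=
  (List.finite_length_eq (S × Bool) N).subset fun _ hw => hw.1

theorem mem_morseWords_iff_dMorseOn_Icc {N : ℕ} {s : ℤ} {w : Word S} (hw : w.length = N)
    (hpw : EqOn (fun n => p (s + n)) (pathOfWord σ (p s) w) (Icc 0 N)) :
    w ∈ morseWords σ M N ↔ DMorseOn σ M (Icc s (s + N)) p :=
  calc w ∈ morseWords σ M N
    _ ↔ DMorseOn σ M (Icc 0 N) (pathOfWord σ 1 w) := and_iff_right hw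
    _ ↔ DMorseOn σ M (Icc 0 N) (pathOfWord σ (p s) w) := by
      rw [pathOfWord_eq_mul_pathOfWord_one σ (p s), dMorseOn_mul_left_iff]
    _ ↔ DMorseOn σ M (Icc 0 N) (fun n => p (s + n)) := (dMorseOn_congr ordConnected_Icc hpw).symm
    _ ↔ DMorseOn σ M (Icc s (s + N)) p := by
      rw [dMorseOn_comp_add_left_iff, image_const_add_Icc, add_zero]

theorem DMorseOn.of_morseWords_subset {N : ℕ} {s : ℤ}
    (hsub : morseWords σ M N ⊆ morseWords σ M₁ N) (hp : DGeodesicOn σ (Icc s (s + N)) p)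
    (h : DMorseOn σ M (Icc s (s + N)) p) : DMorseOn σ M₁ (Icc s (s + N)) p := by
  have hedge : ∀ n ∈ Ico (0 : ℤ) N, wordDist σ (p (s + n)) (p (s + (n + 1))) = 1 := by
    rintro n ⟨hn, hnN⟩
    rw [← add_assoc]
    exact hp.wordDist_succ ⟨by lia, by lia⟩ ⟨by lia, by lia⟩
  obtain ⟨w, hw, hpw⟩ := exists_word_eqOn_pathOfWord hedge
  rw [add_zero] at hpw
  exact (mem_morseWords_iff_dMorseOn_Icc hw hpw).1
    (hsub ((mem_morseWords_iff_dMorseOn_Icc hw hpw).2 h))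

theorem DMorseOn.dLocMorseOn_of_morseWords_subset {L : ℝ} (hp : DGeodesicOn σ (Ici 0) p)
    (hsub : morseWords σ M ⌊L⌋₊ ⊆ morseWords σ M₁ ⌊L⌋₊) (h : DMorseOn σ M (Ici 0) p) :
    DLocMorseOn σ M₁ L (Ici 0) p := by
  refine dLocMorseOn_of_forall_Icc_floor fun s hs => ?_
  have hseg : Icc s (s + ⌊L⌋₊) ⊆ Ici 0 := Icc_subset_Ici_self.trans (Ici_subset_Ici.2 hs)
  exact DMorseOn.of_morseWords_subset hsub (hp.mono hseg) (h.mono hseg)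

theorem cayStronglySigmaCompact_of_uniform {Ms : ℕ → ℝ → ℝ} (hMs : ∀ n, IsMorseGauge (Ms n))
    (h : ∀ M, IsMorseGauge M → ∃ n, ∀ p, DGeodesicRay σ p →
      DMorseOn σ M (Ici 0) p → DMorseOn σ (Ms n) (Ici 0) p) :
    CayStronglySigmaCompact σ :=
  ⟨Ms, hMs, fun p hp M hM hpM => (h M hM).imp fun _ hn => hn p hp hpM, h⟩

end Cayley

end MorseLTG

open MorseLTG in
theorem stmt0_general {G : Type*} [Group G] {S : Type*} [Finite S] (σ : S → G)
    (hmltg : CayGeodesicMLTG σ) : CayStronglySigmaCompact σ := by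
  choose! L M' _ hM' hglobal using hmltg
  let localType (M : {M // IsMorseGauge M}) : ℕ × Finset (Word S) :=
    (⌊L M⌋₊, (finite_morseWords σ M ⌊L M⌋₊).toFinset)
  have : Nonempty {M // IsMorseGauge M} := ⟨0, isMorseGauge_zero⟩
  obtain ⟨e, he⟩ := exists_seq_forall_exists_apply_eq localType
  refine cayStronglySigmaCompact_of_uniform (fun n => hM' (e n) (e n).2) fun M hM => ?_
  obtain ⟨n, hn⟩ := he ⟨M, hM⟩
  have hfloor : ⌊L (e n)⌋₊ = ⌊L M⌋₊ := congrArg Prod.fst hn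
  have hwords : morseWords σ (e n) ⌊L (e n)⌋₊ = morseWords σ M ⌊L M⌋₊ :=
    Finite.toFinset_inj.1 (congrArg Prod.snd hn)
  have hsub : morseWords σ M ⌊L (e n)⌋₊ ⊆ morseWords σ (e n) ⌊L (e n)⌋₊ := by
    rw [hwords, hfloor]
  exact ⟨n, fun p hp hpM => hglobal (e n) (e n).2 (Ici 0) ordConnected_Ici p hp.2
    (hpM.dLocMorseOn_of_morseWords_subset hp.2 hsub)⟩

open MorseLTG in
/-- MLTG for the Cayley graph implies the Morse boundary of `G`
is strongly σ-compact. -/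
theorem stmt0 {G : Type*} [Group G] {S : Type*} [Fintype S] (σ : S → G)
    (hsymm : ∀ s : S, ∃ s' : S, σ s' = (σ s)⁻¹)
    (hgen : Subgroup.closure (Set.range σ) = ⊤)
    (hmltg : CayMLTG σ) :
    CayStronglySigmaCompact σ :=
  stmt0_general σ hmltg.cayGeodesicMLTG
end

section
/- Let C ≥ 0 be a constant. For each constant l ≥ 0 there exists a constant C_l, depending only on C and l, such that the following holds in any proper geodesic metric space X. Let γ : [0,T] → X be a geodesic and let S ∈ [0,T] be such that γ[0,S] is C-contracting. Let λ : [0,T'] → X be a geodesic with S ≤ T', d(λ(0),γ(0)) ≤ l and d(λ(T'),γ(T)) ≤ l. Then (1) λ[0,S] is C_l-contracting, and (2) the Hausdorff distance between λ[0,S] and γ[0,S] is at most C_l. -/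
open Metric Set Filter

/-!
A geodesic that stays at distance more than `2C` from a `C`-contracting set `A` has projection of
diameter at most `8C`: cut off an initial and a final piece that lie within one contraction ball
each, and subdivide the rest into steps of length `2C`. Since each step moves the projection by at
most `C`, the projection moves at most half as fast as the geodesic, and a long geodesic would be
beaten by the detour through `A`.

Consequently passing through projections is almost geodesic: if `p` and `q` are projections of `x`
and `y`, then `d(x, p) + d(p, a)` exceeds `d(x, a)` by at most `22C` for every `a ∈ A`, and either
`d(p, q) ≤ 8C` or `d(x, p) + d(p, q) + d(q, y)` exceeds `d(x, y)` by at most `48C`. Take `A` to be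
`γ[0, S]`, so that `γ(S)` is the projection of `γ(T)`, and `x = λ(w)` with projection `γ(s)`. The
first inequality with `a = γ(0)` bounds `s - w` from above, the second with `y = γ(T)` bounds it
from below, and both bound `d(λ(w), γ(s))` in terms of `s - w`; so `λ(w)` is close to `γ(w)`.
Finally, contraction passes to sets at bounded Hausdorff distance, because the projections of a
point to two such sets are close to each other.
-/

namespace MorseLTG

section FirstHit

variable {R β : Type*} [ConditionallyCompleteLinearOrder R] [TopologicalSpace R] [OrderTopology R]
  [DenselyOrdered R] [LinearOrder β] [TopologicalSpace β] [OrderClosedTopology β]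

theorem exists_first_hit {f : R → β} {a b : R} {D : β} (hab : a ≤ b)
    (hf : ContinuousOn f (Icc a b)) (ha : D ≤ f a) (hb : f b ≤ D) :
    ∃ v ∈ Icc a b, f v = D ∧ ∀ u ∈ Icc a v, D ≤ f u := by
  have hcompact : IsCompact (Icc a b ∩ f ⁻¹' {D}) :=
    isCompact_Icc.of_isClosed_subset
      (hf.preimage_isClosed_of_isClosed isClosed_Icc isClosed_singleton) inter_subset_left
  obtain ⟨v, ⟨hv, hvD⟩, hleast⟩ :=
    hcompact.exists_isLeast (intermediate_value_Icc' hab hf ⟨hb, ha⟩)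
  refine ⟨v, hv, hvD, fun u hu => ?_⟩
  by_contra! huD
  have hub : Icc a u ⊆ Icc a b := Icc_subset_Icc_right (hu.2.trans hv.2)
  obtain ⟨c, hc, hcD⟩ := intermediate_value_Icc' hu.1 (hf.mono hub) ⟨huD.le, ha⟩
  have hcu : c = u := le_antisymm hc.2 (hu.2.trans (hleast ⟨hub hc, hcD⟩))
  exact huD.ne (hcu ▸ hcD)

end FirstHit

variable {X : Type*} [MetricSpace X] {A B : Set X} {C : ℝ} {x y p q : X}

section Geodesic

variable {α : ℝ → X} {a b c : ℝ} {I J : Set ℝ}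

theorem GeodesicOn.mono (h : GeodesicOn I α) (hJ : J ⊆ I) : GeodesicOn J α :=
  fun s hs t ht => h s (hJ hs) t (hJ ht)

theorem GeodesicOn.dist_eq_sub (h : GeodesicOn I α) (ha : a ∈ I) (hb : b ∈ I) (hab : a ≤ b) :
    dist (α a) (α b) = b - a := by
  rw [h a ha b hb, abs_of_nonneg (sub_nonneg.2 hab)]

theorem GeodesicOn.dist_add_dist (h : GeodesicOn (Icc a c) α) (hb : b ∈ Icc a c) :
    dist (α a) (α b) + dist (α b) (α c) = dist (α a) (α c) := by
  have hac := hb.1.trans hb.2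
  rw [h.dist_eq_sub (left_mem_Icc.2 hac) hb hb.1, h.dist_eq_sub hb (right_mem_Icc.2 hac) hb.2,
    h.dist_eq_sub (left_mem_Icc.2 hac) (right_mem_Icc.2 hac) hac]
  ring

theorem GeodesicOn.continuousOn (h : GeodesicOn I α) : ContinuousOn α I := by
  have hlip : LipschitzOnWith 1 α I := LipschitzOnWith.of_dist_le_mul fun s hs t ht => by
    rw [h s hs t ht, Real.dist_eq, abs_sub_comm, NNReal.coe_one, one_mul]
  exact hlip.continuousOn

theorem GeodesicSpace.exists_dist_eq_sub (hX : GeodesicSpace X) {r : ℝ} (hr : 0 ≤ r)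
    (hrxy : r ≤ dist x y) : ∃ z, dist x z = dist x y - r ∧ dist z y = r := by
  obtain ⟨α, h0, h1, hα⟩ := hX x y
  have hmem : dist x y - r ∈ Icc 0 (dist x y) := ⟨sub_nonneg.2 hrxy, sub_le_self _ hr⟩
  refine ⟨α (dist x y - r), ?_, ?_⟩
  · have hlen := hα.dist_eq_sub (left_mem_Icc.2 dist_nonneg) hmem hmem.1
    rwa [h0, sub_zero] at hlen
  · have hlen := hα.dist_eq_sub hmem (right_mem_Icc.2 dist_nonneg) hmem.2
    rwa [h1, sub_sub_cancel] at hlen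

end Geodesic

section Projection

/-- A set is proximinal if every point of the ambient space has a closest point in it. Contraction
only constrains points that have one, so it is paired with this condition throughout. -/
def IsProximinal (A : Set X) : Prop :=
  ∀ x, (projSet A x).Nonempty

theorem dist_eq_infDist_of_mem_projSet (hp : p ∈ projSet A x) : dist x p = infDist x A :=
  le_antisymm ((le_infDist ⟨p, hp.1⟩).2 hp.2) (infDist_le_dist_of_mem hp.1)

theorem isProximinal_of_isCompact (hA : IsCompact A) (hne : A.Nonempty) : IsProximinal A := by
  intro x
  obtain ⟨p, hp, hxp⟩ := hA.exists_infDist_eq_dist hne x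
  exact ⟨p, hp, fun z hz => hxp ▸ infDist_le_dist_of_mem hz⟩

theorem GeodesicOn.isProximinal_image {α : ℝ → X} {a b : ℝ} (h : GeodesicOn (Icc a b) α)
    (hab : a ≤ b) : IsProximinal (α '' Icc a b) :=
  isProximinal_of_isCompact (isCompact_Icc.image_of_continuousOn h.continuousOn)
    ((nonempty_Icc.2 hab).image α)

theorem GeodesicOn.mem_projSet_image {α : ℝ → X} {a b c : ℝ} (h : GeodesicOn (Icc a c) α)
    (hb : b ∈ Icc a c) : α b ∈ projSet (α '' Icc a b) (α c) := by
  refine ⟨mem_image_of_mem α (right_mem_Icc.2 hb.1), ?_⟩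
  rintro _ ⟨s, hs, rfl⟩
  have hc : c ∈ Icc a c := right_mem_Icc.2 (hb.1.trans hb.2)
  rw [dist_comm, h.dist_eq_sub hb hc hb.2, dist_comm,
    h.dist_eq_sub ⟨hs.1, hs.2.trans hb.2⟩ hc (hs.2.trans hb.2)]
  exact sub_le_sub_left hs.2 c

end Projection

section ContractionInequality

theorem ContractingSet.mono {C' : ℝ} (h : ContractingSet C A) (hC : C ≤ C') :
    ContractingSet C' A :=
  fun x => (h x).trans hC

theorem ContractingSet.dist_le (h : ContractingSet C A) (hp : p ∈ projSet A x)
    (hq : q ∈ projSet A y) (hxy : dist x y < infDist x A) : dist p q ≤ C := by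
  set r := infDist x A
  have hbounded : Bornology.IsBounded (⋃ z ∈ ball x r, projSet A z) := by
    refine isBounded_closedBall (x := x) (r := 3 * r) |>.subset (iUnion₂_subset fun z hz w hw => ?_)
    have hzw := dist_eq_infDist_of_mem_projSet hw
    have hzr : infDist z A ≤ r + dist z x := infDist_le_infDist_add_dist
    rw [mem_ball] at hz
    rw [mem_closedBall]
    linarith [dist_triangle_left w x z]
  refine (dist_le_diam_of_mem hbounded ?_ ?_).trans (h x)
  · exact mem_biUnion (mem_ball_self (dist_nonneg.trans_lt hxy)) hp
  · exact mem_biUnion (mem_ball'.2 hxy) hq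

theorem contractingSet_of_forall_dist_le {M : ℝ} (hM : 0 ≤ M) (hA : IsProximinal A)
    (h : ∀ x y p q, p ∈ projSet A x → q ∈ projSet A y → dist x y < infDist x A → dist p q ≤ M) :
    ContractingSet (2 * M) A := by
  intro x
  obtain ⟨p, hp⟩ := hA x
  have hpivot : ∀ u ∈ ⋃ y ∈ ball x (infDist x A), projSet A y, dist p u ≤ M := by
    intro u hu
    obtain ⟨y, hy, hu⟩ := mem_iUnion₂.1 hu
    exact h x y p u hp hu (mem_ball'.1 hy)
  refine diam_le_of_forall_dist_le (by positivity) fun u hu w hw => ?_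
  linarith [dist_triangle_left u w p, hpivot u hu, hpivot w hw]

end ContractionInequality

section FarGeodesic

variable {α : ℝ → X} {s t ρ : ℝ}

theorem ContractingSet.dist_le_nat_mul (h : ContractingSet C A) (hA : IsProximinal A)
    (hρ : 0 ≤ ρ) (hst : s ≤ t) (hα : GeodesicOn (Icc s t) α)
    (hfar : ∀ u ∈ Icc s t, ρ < infDist (α u) A) (hp : p ∈ projSet A (α s))
    (hq : q ∈ projSet A (α t)) (n : ℕ) (hn : t - s ≤ (n + 1) * ρ) : dist p q ≤ (n + 1) * C := by
  induction n generalizing s p with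
  | zero =>
    have hlen := hα.dist_eq_sub (left_mem_Icc.2 hst) (right_mem_Icc.2 hst) hst
    have hs := hfar s (left_mem_Icc.2 hst)
    push_cast at hn ⊢
    linarith [h.dist_le hp hq (by linarith)]
  | succ n ih =>
    set v := min (s + ρ) t
    have hv : v ∈ Icc s t := ⟨le_min (by linarith) hst, min_le_right _ _⟩
    have hsub : Icc v t ⊆ Icc s t := Icc_subset_Icc_left hv.1
    obtain ⟨r, hr⟩ := hA (α v)
    have hfirst : dist p r ≤ C := by
      refine h.dist_le hp hr ?_
      rw [hα.dist_eq_sub (left_mem_Icc.2 hst) hv hv.1]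
      linarith [hfar s (left_mem_Icc.2 hst), min_le_left (s + ρ) t]
    have hrest : dist r q ≤ (n + 1) * C := by
      refine ih hv.2 (hα.mono hsub) (fun u hu => hfar u (hsub hu)) hr ?_
      rw [sub_le_comm]
      push_cast at hn
      exact le_min (by linarith) (sub_le_self _ (by positivity))
    push_cast
    linarith [dist_triangle p r q]

theorem ContractingSet.dist_le_div_add_one_mul (h : ContractingSet C A) (hA : IsProximinal A)
    (hC : 0 ≤ C) (hρ : 0 < ρ) (hst : s ≤ t) (hα : GeodesicOn (Icc s t) α)
    (hfar : ∀ u ∈ Icc s t, ρ < infDist (α u) A) (hp : p ∈ projSet A (α s))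
    (hq : q ∈ projSet A (α t)) : dist p q ≤ ((t - s) / ρ + 1) * C := by
  have hn : t - s ≤ (⌊(t - s) / ρ⌋₊ + 1) * ρ :=
    (div_le_iff₀ hρ).1 (Nat.lt_floor_add_one _).le
  have hfloor : (⌊(t - s) / ρ⌋₊ : ℝ) ≤ (t - s) / ρ :=
    Nat.floor_le (div_nonneg (sub_nonneg.2 hst) hρ.le)
  exact (h.dist_le_nat_mul hA hρ.le hst hα hfar hp hq _ hn).trans (by gcongr)

theorem ContractingSet.dist_le_of_forall_lt_infDist (h : ContractingSet C A)
    (hA : IsProximinal A) (hC : 0 < C) (hst : s ≤ t) (hα : GeodesicOn (Icc s t) α)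
    (hfar : ∀ u ∈ Icc s t, 2 * C < infDist (α u) A) (hp : p ∈ projSet A (α s))
    (hq : q ∈ projSet A (α t)) : dist p q ≤ 8 * C := by
  have hs : s ∈ Icc s t := left_mem_Icc.2 hst
  have ht : t ∈ Icc s t := right_mem_Icc.2 hst
  have hdp := dist_eq_infDist_of_mem_projSet hp
  have hdq := dist_eq_infDist_of_mem_projSet hq
  have hfar_s := hfar s hs
  have hfar_t := hfar t ht
  set a := infDist (α s) A
  set b := infDist (α t) A
  set m := min (s + a - C) t
  set m' := max (t - b + C) m
  have hm : m ∈ Icc s t := ⟨le_min (by linarith) hst, min_le_right _ _⟩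
  have hm' : m' ∈ Icc s t := ⟨hm.1.trans (le_max_right _ _), max_le (by linarith) hm.2⟩
  have hmm' : m ≤ m' := le_max_right _ _
  obtain ⟨r, hr⟩ := hA (α m)
  obtain ⟨r', hr'⟩ := hA (α m')
  have hfirst : dist p r ≤ C := by
    refine h.dist_le hp hr ?_
    rw [hα.dist_eq_sub hs hm hm.1]
    linarith [min_le_left (s + a - C) t]
  have hlast : dist q r' ≤ C := by
    refine h.dist_le hq hr' ?_
    rw [dist_comm, hα.dist_eq_sub hm' ht hm'.2]
    linarith [le_max_left (t - b + C) m]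
  have hmiddle : dist r r' ≤ (m' - m) / 2 + C := by
    have hsub := Icc_subset_Icc hm.1 hm'.2
    refine (h.dist_le_div_add_one_mul hA hC.le (by positivity : 0 < 2 * C) hmm' (hα.mono hsub)
      (fun u hu => hfar u (hsub hu)) hr hr').trans_eq ?_
    field_simp
  have hgap : m' - m ≤ dist p q + 2 * C := by
    have hdetour := dist_triangle4_right (α s) (α t) p q
    rw [hα.dist_eq_sub hs ht hst] at hdetour
    have hpq : 0 ≤ dist p q := dist_nonneg
    rcases max_choice (t - b + C) m with h_max | h_max <;>
      rcases min_choice (s + a - C) t with h_min | h_min <;> linarith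
  linarith [dist_triangle4_right p q r r']

end FarGeodesic

section AlmostGeodesic

theorem ContractingSet.dist_add_dist_le (h : ContractingSet C A) (hA : IsProximinal A)
    (hC : 0 < C) (hX : GeodesicSpace X) {a : X} (hp : p ∈ projSet A x) (ha : a ∈ A) :
    dist x p + dist p a ≤ dist x a + 22 * C := by
  have hxp := dist_eq_infDist_of_mem_projSet hp
  rcases le_total (infDist x A) (3 * C) with hnear | hfar
  · linarith [dist_triangle_left p a x]
  obtain ⟨α, h0, h1, hα⟩ := hX x a
  have hcont : ContinuousOn (fun u => infDist (α u) A) (Icc 0 (dist x a)) :=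
    (continuous_infDist_pt A).comp_continuousOn hα.continuousOn
  obtain ⟨v, hv, hvD, hv_first⟩ : ∃ v ∈ Icc 0 (dist x a), infDist (α v) A = 3 * C ∧
      ∀ u ∈ Icc 0 v, 3 * C ≤ infDist (α u) A :=
    exists_first_hit dist_nonneg hcont (by rwa [h0])
      (by rw [h1, infDist_zero_of_mem ha]; positivity)
  obtain ⟨r, hr⟩ := hA (α v)
  have hvr : dist (α v) r = 3 * C := (dist_eq_infDist_of_mem_projSet hr).trans hvD
  have hpr : dist p r ≤ 8 * C :=
    h.dist_le_of_forall_lt_infDist hA hC hv.1 (hα.mono (Icc_subset_Icc_right hv.2))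
      (fun u hu => by linarith [hv_first u hu]) (by rwa [h0]) hr
  have hsplit := hα.dist_add_dist hv
  rw [h0, h1] at hsplit
  have hxp_le : dist x p ≤ dist x (α v) + 11 * C := by
    linarith [dist_triangle4 x (α v) r p, dist_comm r p]
  have hpa_le : dist p a ≤ 11 * C + dist (α v) a := by
    linarith [dist_triangle4 p r (α v) a, dist_comm r (α v)]
  linarith

theorem ContractingSet.dist_le_dist_add (h : ContractingSet C A) (hA : IsProximinal A)
    (hC : 0 < C) (hX : GeodesicSpace X) (hp : p ∈ projSet A x) (hq : q ∈ projSet A y) :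
    dist p q ≤ dist x y + 22 * C := by
  have hx := h.dist_add_dist_le hA hC hX hp hq.1
  have hy := h.dist_add_dist_le hA hC hX hq hp.1
  rw [dist_comm q p] at hy
  linarith [dist_triangle x y q, dist_triangle_left y p x]

theorem ContractingSet.dist_le_or_dist_add_dist_add_dist_le (h : ContractingSet C A)
    (hA : IsProximinal A) (hC : 0 < C) (hX : GeodesicSpace X) (hp : p ∈ projSet A x)
    (hq : q ∈ projSet A y) :
    dist p q ≤ 8 * C ∨ dist x p + dist p q + dist q y ≤ dist x y + 48 * C := by
  obtain ⟨α, h0, h1, hα⟩ := hX x y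
  by_cases hfar : ∀ u ∈ Icc 0 (dist x y), 2 * C < infDist (α u) A
  · exact .inl <| h.dist_le_of_forall_lt_infDist hA hC dist_nonneg hα hfar
      (by rwa [h0]) (by rwa [h1])
  right
  push Not at hfar
  obtain ⟨u, hu, hnear⟩ := hfar
  obtain ⟨r, hr⟩ := hA (α u)
  have hur := dist_eq_infDist_of_mem_projSet hr
  have hsplit := hα.dist_add_dist hu
  rw [h0, h1] at hsplit
  have hx : dist x p + dist p r ≤ dist x (α u) + 24 * C := by
    linarith [h.dist_add_dist_le hA hC hX hp hr.1, dist_triangle x (α u) r]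
  have hy : dist y q + dist q r ≤ dist (α u) y + 24 * C := by
    linarith [h.dist_add_dist_le hA hC hX hq hr.1, dist_triangle_left y r (α u)]
  linarith [dist_triangle_right p q r, dist_comm q y]

end AlmostGeodesic

section CloseSets

variable {K : ℝ}

theorem ContractingSet.dist_le_of_dist_lt_infDist_add (h : ContractingSet C A)
    (hA : IsProximinal A) (hC : 0 < C) (hX : GeodesicSpace X) (hK : 0 ≤ K)
    (hp : p ∈ projSet A x) (hq : q ∈ projSet A y) (hxy : dist x y < infDist x A + K) :
    dist p q ≤ K + 23 * C := by
  rcases le_total (dist x y) K with hle | hle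
  · linarith [h.dist_le_dist_add hA hC hX hp hq]
  obtain ⟨z, hxz, hzy⟩ := hX.exists_dist_eq_sub hK hle
  obtain ⟨r, hr⟩ := hA z
  have hpr : dist p r ≤ C := h.dist_le hp hr (by linarith)
  have hrq : dist r q ≤ K + 22 * C := hzy ▸ h.dist_le_dist_add hA hC hX hr hq
  linarith [dist_triangle p r q]

theorem ContractingSet.dist_projSet_projSet_le (h : ContractingSet C A) (hA : IsProximinal A)
    (hC : 0 < C) (hX : GeodesicSpace X) (hAB : ∀ a ∈ A, ∃ b ∈ B, dist a b ≤ K)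
    (hBA : ∀ b ∈ B, ∃ a ∈ A, dist b a ≤ K) {p' : X} (hp : p ∈ projSet A x)
    (hp' : p' ∈ projSet B x) : dist p p' ≤ 3 * K + 22 * C := by
  obtain ⟨a, ha, hp'a⟩ := hBA p' hp'.1
  obtain ⟨b, hb, hpb⟩ := hAB p hp.1
  have hxp' : dist x p' ≤ dist x p + K := by
    linarith [hp'.2 b hb, dist_triangle x p b]
  have hpa : dist p a ≤ 2 * K + 22 * C := by
    linarith [h.dist_add_dist_le hA hC hX hp ha, dist_triangle x p' a]
  linarith [dist_triangle_right p p' a]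

theorem ContractingSet.of_forall_exists_dist_le (h : ContractingSet C A) (hA : IsProximinal A)
    (hC : 0 < C) (hX : GeodesicSpace X) (hB : IsProximinal B) (hK : 0 ≤ K)
    (hAB : ∀ a ∈ A, ∃ b ∈ B, dist a b ≤ K) (hBA : ∀ b ∈ B, ∃ a ∈ A, dist b a ≤ K) :
    ContractingSet (2 * (7 * K + 67 * C)) B := by
  refine contractingSet_of_forall_dist_le (by positivity) hB fun x y p' q' hp' hq' hxy => ?_
  obtain ⟨p, hp⟩ := hA x
  obtain ⟨q, hq⟩ := hA y
  have hinfDist : infDist x B ≤ infDist x A + K := by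
    obtain ⟨b, hb, hpb⟩ := hAB p hp.1
    rw [← dist_eq_infDist_of_mem_projSet hp]
    linarith [infDist_le_dist_of_mem hb (x := x), dist_triangle x p b]
  have hpq : dist p q ≤ K + 23 * C :=
    h.dist_le_of_dist_lt_infDist_add hA hC hX hK hp hq (hxy.trans_le hinfDist)
  have hpp' := h.dist_projSet_projSet_le hA hC hX hAB hBA hp hp'
  have hqq' := h.dist_projSet_projSet_le hA hC hX hAB hBA hq hq'
  linarith [dist_triangle4 p' p q q', dist_comm p' p]

end CloseSets

theorem ContractingSet.fellow_travel {l S T T' w : ℝ} {γ lam : ℝ → X} (hX : GeodesicSpace X)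
    (hC : 0 < C) (hST : S ≤ T) (hST' : S ≤ T') (hγ : GeodesicOn (Icc 0 T) γ)
    (h : ContractingSet C (γ '' Icc 0 S)) (hlam : GeodesicOn (Icc 0 T') lam)
    (h0 : dist (lam 0) (γ 0) ≤ l) (hT : dist (lam T') (γ T) ≤ l) (hw : w ∈ Icc 0 S) :
    dist (lam w) (γ w) ≤ 48 * C + 3 * l := by
  have hS : 0 ≤ S := hw.1.trans hw.2
  have hsub : Icc 0 S ⊆ Icc 0 T := Icc_subset_Icc_right hST
  have hwT' : w ∈ Icc 0 T' := ⟨hw.1, hw.2.trans hST'⟩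
  have h0T : (0 : ℝ) ∈ Icc 0 T := left_mem_Icc.2 (hS.trans hST)
  have hTT : T ∈ Icc 0 T := right_mem_Icc.2 (hS.trans hST)
  have h0T' : (0 : ℝ) ∈ Icc 0 T' := left_mem_Icc.2 (hS.trans hST')
  have hTT' : T' ∈ Icc 0 T' := right_mem_Icc.2 (hS.trans hST')
  have hA : IsProximinal (γ '' Icc 0 S) := (hγ.mono hsub).isProximinal_image hS
  obtain ⟨p, hp⟩ := hA (lam w)
  obtain ⟨s, hs, rfl⟩ := hp.1
  have hl : 0 ≤ l := dist_nonneg.trans h0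
  have hlam0 : dist (lam w) (γ 0) ≤ w + l := by
    have hlen := hlam.dist_eq_sub h0T' hwT' hw.1
    linarith [dist_triangle_left (lam w) (γ 0) (lam 0)]
  have hlamT : dist (lam w) (γ T) ≤ T - w + 3 * l := by
    have hlen := hlam.dist_eq_sub hwT' hTT' hwT'.2
    have hlenT' := hlam.dist_eq_sub h0T' hTT' hTT'.1
    have hlenT := hγ.dist_eq_sub h0T hTT hTT.1
    linarith [dist_triangle (lam w) (lam T') (γ T), dist_triangle4 (lam 0) (γ 0) (γ T) (lam T'),
      dist_comm (lam T') (γ T)]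
  have hstart : dist (lam w) (γ s) + (s - w) ≤ 22 * C + l := by
    have hback := h.dist_add_dist_le hA hC hX hp (mem_image_of_mem γ (left_mem_Icc.2 hS))
    rw [dist_comm (γ s), hγ.dist_eq_sub h0T (hsub hs) hs.1] at hback
    linarith
  have hend : dist (lam w) (γ s) + (w - s) ≤ 48 * C + 3 * l := by
    have hS_mem : S ∈ Icc 0 T := ⟨hS, hST⟩
    have hsS := hγ.dist_eq_sub (hsub hs) hS_mem hs.2
    have hST_len := hγ.dist_eq_sub hS_mem hTT hST
    rcases h.dist_le_or_dist_add_dist_add_dist_le hA hC hX hp (hγ.mem_projSet_image hS_mem)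
      with hclose | hdetour <;> linarith [hw.2]
  have hsw := hγ s (hsub hs) w (hsub hw)
  rcases abs_cases (w - s) with ⟨habs, -⟩ | ⟨habs, -⟩ <;>
    linarith [dist_triangle (lam w) (γ s) (γ w)]

end MorseLTG

open MorseLTG in
theorem stmt10_general (C : ℝ) (hC : 0 ≤ C) (l : ℝ) (hl : 0 ≤ l) :
    ∃ Cl : ℝ, 0 ≤ Cl ∧
      ∀ (X : Type*) [MetricSpace X], GeodesicSpace X →
        ∀ (γ lam : ℝ → X) (T T' S : ℝ), 0 ≤ S → S ≤ T → S ≤ T' →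
          GeodesicOn (Set.Icc 0 T) γ → ContractingOn C (Set.Icc 0 S) γ →
          GeodesicOn (Set.Icc 0 T') lam →
          dist (lam 0) (γ 0) ≤ l → dist (lam T') (γ T) ≤ l →
          ContractingOn Cl (Set.Icc 0 S) lam ∧
            Metric.hausdorffDist (lam '' Set.Icc 0 S) (γ '' Set.Icc 0 S) ≤ Cl := by
  -- Working with `C + 1` keeps the subdivision step `2D` positive when `C = 0`.
  set D := C + 1
  have hD : 0 < D := by positivity
  set K := 48 * D + 3 * l
  have hK : 0 ≤ K := by positivity
  refine ⟨2 * (7 * K + 67 * D), by positivity, ?_⟩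
  intro X _ hX γ lam T T' S hS hST hST' hγ hcontr hlam h0 hT
  have hcontrD : ContractingSet D (γ '' Icc 0 S) :=
    hcontr.2.mono (le_add_of_nonneg_right zero_le_one)
  have hlamS : GeodesicOn (Icc 0 S) lam := hlam.mono (Icc_subset_Icc_right hST')
  have hfellow : ∀ w ∈ Icc 0 S, dist (lam w) (γ w) ≤ K := fun w hw =>
    hcontrD.fellow_travel hX hD hST hST' hγ hlam h0 hT hw
  have hγlam : ∀ a ∈ γ '' Icc 0 S, ∃ b ∈ lam '' Icc 0 S, dist a b ≤ K :=
    forall_mem_image.2 fun w hw =>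
      ⟨lam w, mem_image_of_mem lam hw, dist_comm (γ w) _ ▸ hfellow w hw⟩
  have hlamγ : ∀ b ∈ lam '' Icc 0 S, ∃ a ∈ γ '' Icc 0 S, dist b a ≤ K :=
    forall_mem_image.2 fun w hw => ⟨γ w, mem_image_of_mem γ hw, hfellow w hw⟩
  refine ⟨⟨hlamS, hcontrD.of_forall_exists_dist_le (hcontr.1.isProximinal_image hS) hD hX
    (hlamS.isProximinal_image hS) hK hγlam hlamγ⟩, ?_⟩
  exact (hausdorffDist_le_of_mem_dist hK hlamγ hγlam).trans (by linarith)

open MorseLTG in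
/-- passing contraction to a nearby geodesic. -/
theorem stmt10 (C : ℝ) (hC : 0 ≤ C) (l : ℝ) (hl : 0 ≤ l) :
    ∃ Cl : ℝ, 0 ≤ Cl ∧
      ∀ (X : Type) [MetricSpace X] [ProperSpace X], GeodesicSpace X →
        ∀ (γ lam : ℝ → X) (T T' S : ℝ), 0 ≤ S → S ≤ T → S ≤ T' →
          GeodesicOn (Set.Icc 0 T) γ → ContractingOn C (Set.Icc 0 S) γ →
          GeodesicOn (Set.Icc 0 T') lam →
          dist (lam 0) (γ 0) ≤ l → dist (lam T') (γ T) ≤ l →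
          ContractingOn Cl (Set.Icc 0 S) lam ∧
            Metric.hausdorffDist (lam '' Set.Icc 0 S) (γ '' Set.Icc 0 S) ≤ Cl := by
  obtain ⟨Cl, hCl, h⟩ := stmt10_general C hC l hl
  exact ⟨Cl, hCl, fun X _ _ => h X⟩
end
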